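/- Let S ∈ ℝ^{p×p} be symmetric positive semidefinite and μ > 0, and define f₁(Θ) = Tr(SΘ) − log det(Θ) + μ ‖Θ‖_{1,off} and f₂(Θ) = Tr(P_𝔊(S)Θ) − log det(Θ) + μ ‖Θ‖_{1,off} on symmetric positive definite matrices Θ. Then the infimum of f₁ over {Θ ≻ 0, Θ ∈ W_𝔊} equals the infimum of f₂ over {Θ ≻ 0}; moreover, if f₂ has a unique minimizer Θ̂ over {Θ ≻ 0}, then Θ̂ ∈ W_𝔊 and Θ̂ is the unique minimizer of f₁ over {Θ ≻ 0, Θ ∈ W_𝔊}. -/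

import Mathlib

/-!
Averaging over `𝔊` preserves feasibility and does not increase the symmetrized objective, while the
two objectives agree on `W_𝔊` because `P_𝔊` is self-adjoint for the trace pairing and fixes `W_𝔊`
pointwise. Both claims follow formally from these two facts (`objective_reynolds_le` and
`objective_eq_of_fixed`).

For the monotonicity, the trace term is unchanged since `P_𝔊` is self-adjoint and idempotent, and
the `ℓ₁` term does not grow by the triangle inequality. For the log-determinant, let `B = P_𝔊(Θ)`. The
tangent-plane bound `log det Θ ≤ log det B + Tr(B⁻¹Θ) - p` is used at `B` itself: as `B⁻¹ ∈ W_𝔊`,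
`Tr(B⁻¹Θ) = Tr(B⁻¹B) = p`, hence `log det Θ ≤ log det B`.
-/

open MeasureTheory ProbabilityTheory Matrix Finset Real

noncomputable section

/-- The `p × p` permutation matrix `Π_σ` of a permutation `σ` of `Fin p`. -/
def permMatrix {p : ℕ} (σ : Equiv.Perm (Fin p)) : Matrix (Fin p) (Fin p) ℝ :=
  Matrix.of fun i j => if σ j = i then (1 : ℝ) else 0

/-- `M` lies in the fixed-point subspace `W_𝔊`, i.e. `Π_g M Π_gᵀ = M` for all `g ∈ 𝔊`. -/
def IsFixedPoint {p : ℕ} (G : Subgroup (Equiv.Perm (Fin p)))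
    (M : Matrix (Fin p) (Fin p) ℝ) : Prop :=
  ∀ g ∈ G, permMatrix g * M * (permMatrix g)ᵀ = M

/-- The Reynolds average `P_𝔊(M) = |𝔊|⁻¹ ∑_{g ∈ 𝔊} Π_g M Π_gᵀ`. -/
def reynolds {p : ℕ} (G : Subgroup (Equiv.Perm (Fin p))) [Fintype G]
    (M : Matrix (Fin p) (Fin p) ℝ) : Matrix (Fin p) (Fin p) ℝ :=
  (Fintype.card G : ℝ)⁻¹ •
    ∑ g : G, permMatrix (g : Equiv.Perm (Fin p)) * M * (permMatrix (g : Equiv.Perm (Fin p)))ᵀ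

/-- The off-diagonal ℓ₁ norm `‖M‖_{1,off} = ∑_{i ≠ j} |M_ij|`. -/
def offDiagL1 {p : ℕ} (M : Matrix (Fin p) (Fin p) ℝ) : ℝ :=
  ∑ i, ∑ j, if i ≠ j then |M i j| else 0

/-- The ℓ₁-regularized log-determinant objective `Θ ↦ Tr(AΘ) − log det Θ + μ ‖Θ‖_{1,off}`. -/
def logDetObjective {p : ℕ} (A : Matrix (Fin p) (Fin p) ℝ) (μ : ℝ)
    (Θ : Matrix (Fin p) (Fin p) ℝ) : ℝ :=
  (A * Θ).trace - Real.log Θ.det + μ * offDiagL1 Θ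

/-- Conjugation by a permutation matrix is a simultaneous relabelling of rows and columns. -/
lemma permMatrix_conj {p : ℕ} (σ : Equiv.Perm (Fin p)) (M : Matrix (Fin p) (Fin p) ℝ) :
    permMatrix σ * M * (permMatrix σ)ᵀ = M.submatrix σ.symm σ.symm := by
  ext i j
  simp [permMatrix, Matrix.mul_apply, ← Equiv.eq_symm_apply]

lemma isFixedPoint_iff {p : ℕ} (G : Subgroup (Equiv.Perm (Fin p)))
    (M : Matrix (Fin p) (Fin p) ℝ) :
    IsFixedPoint G M ↔ ∀ g ∈ G, M.submatrix g.symm g.symm = M := by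
  simp only [IsFixedPoint, permMatrix_conj]

lemma reynolds_eq {p : ℕ} (G : Subgroup (Equiv.Perm (Fin p))) [Fintype G]
    (M : Matrix (Fin p) (Fin p) ℝ) :
    reynolds G M = (Fintype.card G : ℝ)⁻¹ •
      ∑ g : G, M.submatrix (g : Equiv.Perm (Fin p)).symm (g : Equiv.Perm (Fin p)).symm := by
  simp only [reynolds, permMatrix_conj]

lemma reynolds_isFixedPoint {p : ℕ} (G : Subgroup (Equiv.Perm (Fin p))) [Fintype G]
    (M : Matrix (Fin p) (Fin p) ℝ) : IsFixedPoint G (reynolds G M) := by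
  rw [isFixedPoint_iff]
  intro h hh
  ext i j
  simp only [reynolds_eq, Matrix.submatrix_apply, Matrix.smul_apply, Matrix.sum_apply]
  congr 1
  exact Fintype.sum_equiv (Equiv.mulLeft (⟨h, hh⟩ : G)) _ _ fun g => rfl

lemma reynolds_of_fixed {p : ℕ} (G : Subgroup (Equiv.Perm (Fin p))) [Fintype G]
    {M : Matrix (Fin p) (Fin p) ℝ} (hM : IsFixedPoint G M) : reynolds G M = M := by
  rw [isFixedPoint_iff] at hM
  rw [reynolds_eq, Finset.sum_congr rfl fun (g : G) _ => hM g.1 g.2,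
    Finset.sum_const, Finset.card_univ, ← Nat.cast_smul_eq_nsmul ℝ, smul_smul,
    inv_mul_cancel₀ (Nat.cast_ne_zero.mpr Fintype.card_ne_zero), one_smul]

/-- The Reynolds average is self-adjoint for the trace pairing. -/
lemma trace_reynolds_mul {p : ℕ} (G : Subgroup (Equiv.Perm (Fin p))) [Fintype G]
    (A B : Matrix (Fin p) (Fin p) ℝ) :
    (reynolds G A * B).trace = (A * reynolds G B).trace := by
  simp only [reynolds_eq, Matrix.smul_mul, Matrix.mul_smul, Matrix.trace_smul, Matrix.sum_mul,
    Matrix.mul_sum, Matrix.trace_sum]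
  congr 1
  refine Fintype.sum_equiv (Equiv.inv G) _ _ fun g => ?_
  simp only [Matrix.trace, Matrix.diag, Matrix.mul_apply, Matrix.submatrix_apply]
  refine Fintype.sum_equiv (g : Equiv.Perm (Fin p)).symm _ _ fun i => ?_
  refine Fintype.sum_equiv (g : Equiv.Perm (Fin p)).symm _ _ fun j => ?_
  simp [← Equiv.Perm.inv_def]

lemma reynolds_posDef {p : ℕ} (G : Subgroup (Equiv.Perm (Fin p))) [Fintype G]
    {M : Matrix (Fin p) (Fin p) ℝ} (hM : M.PosDef) : (reynolds G M).PosDef := by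
  rw [reynolds_eq]
  have hc : (0 : ℝ) < (Fintype.card G : ℝ)⁻¹ := by
    have := Fintype.card_pos (α := G)
    positivity
  refine Matrix.PosDef.smul ?_ hc
  refine Finset.sum_induction_nonempty _ Matrix.PosDef (fun _ _ ha hb => ha.add hb)
    Finset.univ_nonempty fun g _ => ?_
  exact hM.submatrix (Equiv.injective _)

lemma isFixedPoint_inv {p : ℕ} (G : Subgroup (Equiv.Perm (Fin p)))
    {M : Matrix (Fin p) (Fin p) ℝ} (hM : IsFixedPoint G M) : IsFixedPoint G M⁻¹ := by
  rw [isFixedPoint_iff] at hM ⊢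
  intro g hg
  rw [← Matrix.inv_submatrix_equiv, hM g hg]

lemma log_det_le_trace_sub {p : ℕ} {C : Matrix (Fin p) (Fin p) ℝ} (hC : C.PosDef) :
    Real.log C.det ≤ C.trace - p := by
  rw [hC.isHermitian.det_eq_prod_eigenvalues, hC.isHermitian.trace_eq_sum_eigenvalues]
  simp only [RCLike.ofReal_real_eq_id, id]
  rw [Real.log_prod fun i _ => (hC.eigenvalues_pos i).ne']
  calc ∑ i, Real.log (hC.isHermitian.eigenvalues i)
      ≤ ∑ i, (hC.isHermitian.eigenvalues i - 1) :=
        Finset.sum_le_sum fun i _ => Real.log_le_sub_one_of_pos (hC.eigenvalues_pos i)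
    _ = _ := by simp

open scoped MatrixOrder Matrix.Norms.L2Operator in
/-- The graph of the concave function `log det` lies below its tangent plane at `B`. -/
lemma log_det_le_tangent {p : ℕ} {A B : Matrix (Fin p) (Fin p) ℝ} (hA : A.PosDef)
    (hB : B.PosDef) : Real.log A.det ≤ Real.log B.det + ((B⁻¹ * A).trace - p) := by
  obtain ⟨R, hR⟩ : ∃ R : Matrix (Fin p) (Fin p) ℝ, B⁻¹ = Rᴴ * R :=
    CStarAlgebra.nonneg_iff_eq_star_mul_self.mp hB.inv.posSemidef.nonneg
  have hdet : (R * A * Rᴴ).det = B.det⁻¹ * A.det := by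
    rw [← Ring.inverse_eq_inv', ← Matrix.det_nonsing_inv, hR]
    simp only [Matrix.det_mul]
    ring
  have htr : (R * A * Rᴴ).trace = (B⁻¹ * A).trace := by
    rw [hR, Matrix.trace_mul_comm, ← Matrix.mul_assoc]
  have hpos : 0 < (R * A * Rᴴ).det := by
    rw [hdet]
    exact mul_pos (inv_pos.mpr hB.det_pos) hA.det_pos
  have hC : (R * A * Rᴴ).PosDef :=
    (hA.posSemidef.mul_mul_conjTranspose_same R).posDef_iff_isUnit.mpr
      ((Matrix.isUnit_iff_isUnit_det _).mpr hpos.ne'.isUnit)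
  have h := log_det_le_trace_sub hC
  rw [hdet, htr, Real.log_mul (inv_ne_zero hB.det_pos.ne') hA.det_pos.ne', Real.log_inv] at h
  linarith

lemma log_det_le_reynolds {p : ℕ} (G : Subgroup (Equiv.Perm (Fin p))) [Fintype G]
    {Θ : Matrix (Fin p) (Fin p) ℝ} (hΘ : Θ.PosDef) :
    Real.log Θ.det ≤ Real.log (reynolds G Θ).det := by
  have hB := reynolds_posDef G hΘ
  have h := log_det_le_tangent hΘ hB
  rw [← reynolds_of_fixed G (isFixedPoint_inv G (reynolds_isFixedPoint G Θ)),
    trace_reynolds_mul, Matrix.nonsing_inv_mul _ hB.det_pos.ne'.isUnit] at h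
  simpa using h

lemma offDiagL1_submatrix {p : ℕ} (σ : Equiv.Perm (Fin p)) (M : Matrix (Fin p) (Fin p) ℝ) :
    offDiagL1 (M.submatrix σ σ) = offDiagL1 M := by
  unfold offDiagL1
  refine Fintype.sum_equiv σ _ _ fun i => ?_
  refine Fintype.sum_equiv σ _ _ fun j => ?_
  simp

lemma offDiagL1_add_le {p : ℕ} (M N : Matrix (Fin p) (Fin p) ℝ) :
    offDiagL1 (M + N) ≤ offDiagL1 M + offDiagL1 N := by
  simp only [offDiagL1, ← Finset.sum_add_distrib]
  refine Finset.sum_le_sum fun i _ => Finset.sum_le_sum fun j _ => ?_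
  split_ifs
  · exact abs_add_le _ _
  · simp

lemma offDiagL1_smul {p : ℕ} {c : ℝ} (hc : 0 ≤ c) (M : Matrix (Fin p) (Fin p) ℝ) :
    offDiagL1 (c • M) = c * offDiagL1 M := by
  simp only [offDiagL1, Finset.mul_sum, Matrix.smul_apply, smul_eq_mul, abs_mul, abs_of_nonneg hc,
    mul_ite, mul_zero]

lemma offDiagL1_reynolds_le {p : ℕ} (G : Subgroup (Equiv.Perm (Fin p))) [Fintype G]
    (M : Matrix (Fin p) (Fin p) ℝ) : offDiagL1 (reynolds G M) ≤ offDiagL1 M := by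
  have hc : (0 : ℝ) < Fintype.card G := by exact_mod_cast Fintype.card_pos (α := G)
  rw [reynolds_eq, offDiagL1_smul (inv_nonneg.mpr hc.le), inv_mul_le_iff₀ hc]
  refine (Finset.le_sum_of_subadditive offDiagL1 (by simp [offDiagL1]) offDiagL1_add_le _ _).trans ?_
  simp [offDiagL1_submatrix]

lemma objective_eq_of_fixed {p : ℕ} (G : Subgroup (Equiv.Perm (Fin p))) [Fintype G]
    (S : Matrix (Fin p) (Fin p) ℝ) (μ : ℝ) {Θ : Matrix (Fin p) (Fin p) ℝ}
    (hΘ : IsFixedPoint G Θ) :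
    logDetObjective (reynolds G S) μ Θ = logDetObjective S μ Θ := by
  rw [logDetObjective, logDetObjective, trace_reynolds_mul, reynolds_of_fixed G hΘ]

lemma objective_reynolds_le {p : ℕ} (G : Subgroup (Equiv.Perm (Fin p))) [Fintype G]
    (S : Matrix (Fin p) (Fin p) ℝ) {μ : ℝ} (hμ : 0 < μ) {Θ : Matrix (Fin p) (Fin p) ℝ}
    (hΘ : Θ.PosDef) :
    logDetObjective (reynolds G S) μ (reynolds G Θ) ≤ logDetObjective (reynolds G S) μ Θ := by
  have h1 := log_det_le_reynolds G hΘ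
  have h2 := mul_le_mul_of_nonneg_left (offDiagL1_reynolds_le G Θ) hμ.le
  have h3 : (reynolds G S * reynolds G Θ).trace = (reynolds G S * Θ).trace := by
    rw [← trace_reynolds_mul, reynolds_of_fixed G (reynolds_isFixedPoint G S)]
  unfold logDetObjective
  linarith

/-- Restricting the ℓ₁-regularized log-determinant program to the fixed-point subspace is the
same as replacing the input matrix `S` by its Reynolds average `P_𝔊(S)`: the two programs have
the same optimal value, and a unique minimizer of the symmetrized program lies in `W_𝔊` and is
the unique minimizer of the restricted program. -/
theorem logDet_symmetrization_equivalence
    {p : ℕ} (G : Subgroup (Equiv.Perm (Fin p))) [Fintype G]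
    (S : Matrix (Fin p) (Fin p) ℝ) (hS : S.PosSemidef) (μ : ℝ) (hμ : 0 < μ) :
    (⨅ Θ : {Θ : Matrix (Fin p) (Fin p) ℝ // Θ.PosDef ∧ IsFixedPoint G Θ},
        logDetObjective S μ Θ)
      = (⨅ Θ : {Θ : Matrix (Fin p) (Fin p) ℝ // Θ.PosDef},
          logDetObjective (reynolds G S) μ Θ) ∧
    ∀ Θhat : Matrix (Fin p) (Fin p) ℝ, Θhat.PosDef →
      (∀ Θ : Matrix (Fin p) (Fin p) ℝ, Θ.PosDef → Θ ≠ Θhat →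
        logDetObjective (reynolds G S) μ Θhat < logDetObjective (reynolds G S) μ Θ) →
      IsFixedPoint G Θhat ∧
        ∀ Θ : Matrix (Fin p) (Fin p) ℝ, Θ.PosDef → IsFixedPoint G Θ → Θ ≠ Θhat →
          logDetObjective S μ Θhat < logDetObjective S μ Θ := by
  constructor
  · -- An infimum of an unbounded family is `0`, so boundedness below is transferred between the two
    -- families before the infima are compared.
    set f : {Θ : Matrix (Fin p) (Fin p) ℝ // Θ.PosDef ∧ IsFixedPoint G Θ} → ℝ :=
      fun Θ => logDetObjective S μ Θ with hf
    set k : {Θ : Matrix (Fin p) (Fin p) ℝ // Θ.PosDef} → ℝ :=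
      fun Θ => logDetObjective (reynolds G S) μ Θ with hk
    change iInf f = iInf k
    have hfk : ∀ Θ, k ⟨Θ.1, Θ.2.1⟩ = f Θ := fun Θ => objective_eq_of_fixed G S μ Θ.2.2
    have hkf : ∀ Θ, ∃ Θ', f Θ' ≤ k Θ := fun Θ =>
      ⟨⟨reynolds G Θ, reynolds_posDef G Θ.2, reynolds_isFixedPoint G _⟩, by
        rw [← hfk]
        exact objective_reynolds_le G S hμ Θ.2⟩
    have : Nonempty {Θ : Matrix (Fin p) (Fin p) ℝ // Θ.PosDef} := ⟨⟨1, Matrix.PosDef.one⟩⟩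
    have : Nonempty {Θ : Matrix (Fin p) (Fin p) ℝ // Θ.PosDef ∧ IsFixedPoint G Θ} :=
      ⟨(hkf ⟨1, Matrix.PosDef.one⟩).choose⟩
    by_cases hb : BddBelow (Set.range k)
    · have hb' : BddBelow (Set.range f) := by
        obtain ⟨c, hc⟩ := hb
        refine ⟨c, ?_⟩
        rintro _ ⟨Θ, rfl⟩
        exact hfk Θ ▸ hc ⟨_, rfl⟩
      apply le_antisymm
      · refine le_ciInf fun Θ => ?_
        obtain ⟨Θ', h⟩ := hkf Θ
        exact (ciInf_le hb' Θ').trans h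
      · refine le_ciInf fun Θ => ?_
        rw [← hfk]
        exact ciInf_le hb _
    · have hb' : ¬ BddBelow (Set.range f) := by
        rintro ⟨c, hc⟩
        refine hb ⟨c, ?_⟩
        rintro _ ⟨Θ, rfl⟩
        obtain ⟨Θ', h⟩ := hkf Θ
        exact (hc ⟨Θ', rfl⟩).trans h
      rw [Real.iInf_of_not_bddBelow hb, Real.iInf_of_not_bddBelow hb']
  · intro Θhat hpd hmin
    have hfix : IsFixedPoint G Θhat := by
      by_contra hne
      refine absurd (objective_reynolds_le G S hμ hpd) (not_le.mpr ?_)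
      refine hmin _ (reynolds_posDef G hpd) fun h => hne ?_
      rw [← h]
      exact reynolds_isFixedPoint G Θhat
    refine ⟨hfix, fun Θ hΘ hΘfix hne => ?_⟩
    rw [← objective_eq_of_fixed G S μ hfix, ← objective_eq_of_fixed G S μ hΘfix]
    exact hmin Θ hΘ hne

end
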